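/- Let d ≥ 1 and suppose n = qd + a with q ≥ 0, 2 ≤ a ≤ d + 1, and d < n. Then gp(Circ(n, {1, 2, …, d})) ≥ ⌈(d+1)/a⌉. -/

import Mathlib

/-!
Write `k = ⌈(d+1)/a⌉ = (d + a) / a`. The set `S = {0, a, 2a, …, (k-1)a}` is contained in
`{0, …, d}` and is in general position. An increasing pair of `S` is joined by an arc, hence is at
distance `1`. For a decreasing pair with index difference `m ≥ 1`, the cyclic offset is
`n - m a = q d - (m - 1) a`, which lies in `((q-1)d, qd]`, so the distance is exactly `q`
(here `q ≥ 1`, because `q = 0` would give `n = a ≤ m a ≤ d < n`). So a geodesic from `u` to `v`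
through a third vertex `w` of `S` would need either `1 = d(u,v) = d(u,w) + d(w,v) ≥ 2`, or `q =
d(u,w) + d(w,v)` where at least one of the two summands is `q` (a decreasing pair cannot be split
into two increasing ones) and the other is positive; both are impossible.

The distances come from `exists_offset_of_isChain` (a walk with `L` arcs advances by at most `L d`)
and `exists_dipath` (jumping greedily by `d` reaches offset `D` in `⌈D/d⌉` steps).
-/

variable {V : Type*}

/-- `p` is a (nonempty) directed path: distinct vertices joined by consecutive arcs. -/
def IsDipath (A : V → V → Prop) (p : List V) : Prop :=
  p ≠ [] ∧ p.Nodup ∧ p.Chain' A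

/-- `p` is a directed path from `u` to `v`. -/
def IsDipathFrom (A : V → V → Prop) (u v : V) (p : List V) : Prop :=
  IsDipath A p ∧ p.head? = some u ∧ p.getLast? = some v

/-- The directed distance from `u` to `v`, as an extended natural number
(`⊤` if `v` is not reachable from `u`). -/
noncomputable def ddist (A : V → V → Prop) (u v : V) : ℕ∞ :=
  sInf {n : ℕ∞ | ∃ p : List V, IsDipathFrom A u v p ∧ (p.length : ℕ∞) = n + 1}

/-- `p` is a geodesic (shortest directed path) from `u` to `v`. -/
def IsGeodesic (A : V → V → Prop) (u v : V) (p : List V) : Prop :=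
  IsDipathFrom A u v p ∧ (p.length : ℕ∞) = ddist A u v + 1

/-- `S` is in general position: no geodesic between two vertices of `S` passes
through a third vertex of `S`. -/
def InGenPos (A : V → V → Prop) (S : Set V) : Prop :=
  ∀ u ∈ S, ∀ v ∈ S, ∀ p : List V, IsGeodesic A u v p →
    ∀ w ∈ p, w ∈ S → w = u ∨ w = v

/-- The general position number of a digraph on a finite vertex type. -/
noncomputable def gp (V : Type*) [Fintype V] (A : V → V → Prop) : ℕ :=
  sSup {n : ℕ | ∃ S : Set V, InGenPos A S ∧ S.ncard = n}

/-- The arc relation of the circulant digraph `Circ(n, {1, 2, …, d})`. -/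
def circA (n d : ℕ) : ZMod n → ZMod n → Prop :=
  fun x y => ∃ c : ℕ, 1 ≤ c ∧ c ≤ d ∧ y = x + (c : ZMod n)

/-- A walk with `L` arcs in the circulant digraph advances by some `s ≤ L * d`. -/
lemma exists_offset_of_isChain (n d : ℕ) (l : List (ZMod n)) (u v : ZMod n)
    (hc : (u :: l).IsChain (circA n d)) (hv : (u :: l).getLast? = some v) :
    ∃ s : ℕ, s ≤ l.length * d ∧ v = u + (s : ZMod n) := by
  induction l generalizing u with
  | nil => exact ⟨0, by simp, by simpa using hv.symm⟩
  | cons b l ih =>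
    rw [List.isChain_cons_cons] at hc
    obtain ⟨⟨c, -, hcd, rfl⟩, hc⟩ := hc
    obtain ⟨s, hs, rfl⟩ := ih _ hc (by simpa using hv)
    refine ⟨c + s, ?_, by push_cast; ring⟩
    rw [List.length_cons, Nat.add_mul]
    omega

lemma offset_le_of_isChain (n d D : ℕ) (hD : D < n) (l : List (ZMod n)) (u : ZMod n)
    (hc : (u :: l).IsChain (circA n d))
    (hv : (u :: l).getLast? = some (u + (D : ZMod n))) :
    D ≤ l.length * d := by
  obtain ⟨s, hs, h⟩ := exists_offset_of_isChain n d l u _ hc hv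
  have h' := (ZMod.natCast_eq_natCast_iff' D s n).1 (add_left_cancel h)
  rw [Nat.mod_eq_of_lt hD] at h'
  exact (h' ▸ Nat.mod_le s n).trans hs

/-- If `(r - 1) d < D ≤ r d`, then jumping by `d` as long as possible yields a directed path with
`r` arcs from `u` to `u + D`. -/
lemma exists_dipath (n d D r : ℕ) (hD : D < n) (h1 : D ≤ r * d) (h2 : r * d < D + d)
    (u : ZMod n) :
    ∃ p : List (ZMod n), IsDipathFrom (circA n d) u (u + (D : ZMod n)) p ∧ p.length = r + 1 := by
  -- The offset of the `t`-th vertex; it is strictly increasing for `t ≤ r`.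
  set g : ℕ → ℕ := fun t => min (t * d) D with hg
  have hlt : ∀ s t, s < t → t ≤ r → g s < g t := by
    intro s t hst htr
    have e1 : (s + 1) * d ≤ t * d := Nat.mul_le_mul_right d hst
    have e2 : t * d ≤ r * d := Nat.mul_le_mul_right d htr
    rw [Nat.add_mul] at e1
    simp only [hg]
    omega
  refine ⟨(List.range (r + 1)).map (fun t => u + (g t : ZMod n)), ⟨⟨by simp, ?_, ?_⟩, ?_, ?_⟩,
    by simp⟩
  · refine List.Nodup.map_on ?_ List.nodup_range
    intro s hs t ht hst
    rw [List.mem_range] at hs ht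
    have h' := (ZMod.natCast_eq_natCast_iff' _ _ n).1 (add_left_cancel hst)
    rw [Nat.mod_eq_of_lt (lt_of_le_of_lt (min_le_right _ _) hD),
      Nat.mod_eq_of_lt (lt_of_le_of_lt (min_le_right _ _) hD)] at h'
    rcases lt_trichotomy s t with h | h | h
    · exact absurd h' (hlt s t h (by omega)).ne
    · exact h
    · exact absurd h' (hlt t s h (by omega)).ne'
  · show List.IsChain _ _
    rw [List.isChain_iff_getElem]
    intro t ht
    simp only [List.length_map, List.length_range] at ht
    simp only [List.getElem_map, List.getElem_range]
    have h3 := hlt t (t + 1) (by omega) (by omega)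
    refine ⟨g (t + 1) - g t, by omega, ?_, ?_⟩
    · simp only [hg, Nat.add_mul]
      omega
    · rw [Nat.cast_sub h3.le]
      ring
  · simp [List.range_succ_eq_map, hg]
  · simp [List.range_succ, hg, min_eq_right h1]

/-- The distance from `i * a` to `j * a` in `Circ(q d + a, {1, …, d})`, for distinct multiples
`i * a`, `j * a` of `a` that are at most `d`; the value at `i = j` is irrelevant. -/
def stepDist (q i j : ℕ) : ℕ := if i < j then 1 else q

/-- The cyclic offset from `i * a` to `j * a` lies in `((r-1)d, rd]` for `r = stepDist q i j`. -/
lemma exists_offset (d q a n i j : ℕ) (ha : 2 ≤ a) (hn : n = q * d + a) (hdn : d < n)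
    (hi : i * a ≤ d) (hj : j * a ≤ d) (hij : i ≠ j) :
    ∃ D : ℕ, D < n ∧ D ≤ stepDist q i j * d ∧ stepDist q i j * d < D + d ∧
      ((j * a : ℕ) : ZMod n) = ((i * a : ℕ) : ZMod n) + (D : ZMod n) := by
  rcases lt_or_gt_of_ne hij with h | h
  · have e : (i + 1) * a ≤ j * a := Nat.mul_le_mul_right a h
    rw [Nat.add_mul] at e
    refine ⟨j * a - i * a, by omega, ?_, ?_, ?_⟩
    · simp only [stepDist, if_pos h]; omega
    · simp only [stepDist, if_pos h]; omega
    · rw [Nat.cast_sub (by omega)]; ring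
  · have e : (j + 1) * a ≤ i * a := Nat.mul_le_mul_right a h
    rw [Nat.add_mul] at e
    refine ⟨n - (i * a - j * a), by omega, ?_, ?_, ?_⟩
    · simp only [stepDist, if_neg h.not_gt]; omega
    · simp only [stepDist, if_neg h.not_gt]; omega
    · rw [Nat.cast_sub (by omega), Nat.cast_sub (by omega), ZMod.natCast_self]; ring

lemma stepDist_lt (q i w j : ℕ) (hq : 1 ≤ q) :
    stepDist q i j < stepDist q i w + stepDist q w j := by
  unfold stepDist
  split_ifs <;> omega

/-- A geodesic has at most as many arcs as any directed path with the same ends. -/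
lemma IsGeodesic.length_le {V : Type*} {A : V → V → Prop} {u v : V} {p p' : List V}
    (hp : IsGeodesic A u v p) (hp' : IsDipathFrom A u v p') : p.length ≤ p'.length := by
  have hpos : 0 < p'.length := List.length_pos_iff.2 hp'.1.1
  have h : ddist A u v ≤ ((p'.length - 1 : ℕ) : ℕ∞) := by
    refine sInf_le ⟨p', hp', ?_⟩
    exact_mod_cast (Nat.sub_add_cancel hpos).symm
  have h2 : (p.length : ℕ∞) ≤ ((p'.length - 1 : ℕ) : ℕ∞) + 1 := by
    rw [hp.2]
    gcongr
  have h3 : p.length ≤ p'.length - 1 + 1 := by exact_mod_cast h2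
  omega

/-- Multiples of `a` in `{0, …, d}` are in general position. -/
lemma inGenPos_multiples (d q a n k : ℕ) (ha : 2 ≤ a) (hn : n = q * d + a) (hdn : d < n)
    (hk : ∀ i < k, i * a ≤ d) :
    InGenPos (circA n d) ((fun i : ℕ => ((i * a : ℕ) : ZMod n)) '' Set.Iio k) := by
  rintro _ ⟨i, hi, rfl⟩ _ ⟨j, hj, rfl⟩ p hp _ hwp ⟨w, hw, rfl⟩
  by_contra! hne
  have hi := hk i hi
  have hj := hk j hj
  have hw := hk w hw
  have hwi : i ≠ w := fun h => hne.1 (by rw [h])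
  have hwj : w ≠ j := fun h => hne.2 (by rw [h])
  obtain ⟨l₁, l₂, rfl⟩ := List.append_of_mem hwp
  obtain ⟨⟨-, hnd, hc⟩, hhead, hlast⟩ := hp.1
  have hc : List.IsChain _ _ := hc
  -- The first vertex differs from `w`, so the initial segment is nonempty.
  obtain _ | ⟨b, l₁⟩ := l₁
  · exact hne.1 (by simpa using hhead)
  obtain rfl : b = ((i * a : ℕ) : ZMod n) := Option.some.inj hhead
  have hij : i ≠ j := by
    rintro rfl
    rw [List.getLast?_append_cons] at hlast
    have hm := List.mem_of_getLast? hlast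
    exact (List.nodup_cons.1 hnd).1 (List.mem_append_right l₁ hm)
  have hq : 1 ≤ q := by
    by_contra! h0
    obtain rfl : q = 0 := by omega
    have hia : i * a < 1 * a := by omega
    have hja : j * a < 1 * a := by omega
    have := Nat.lt_of_mul_lt_mul_right hia
    have := Nat.lt_of_mul_lt_mul_right hja
    omega
  obtain ⟨D, hD, h1, h2, hu⟩ := exists_offset d q a n i j ha hn hdn hi hj hij
  obtain ⟨D₁, hD₁, -, h2₁, hu₁⟩ := exists_offset d q a n i w ha hn hdn hi hw hwi
  obtain ⟨D₂, hD₂, -, h2₂, hu₂⟩ := exists_offset d q a n w j ha hn hdn hw hj hwj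
  obtain ⟨p', hp', hlen⟩ := exists_dipath n d D _ hD h1 h2 ((i * a : ℕ) : ZMod n)
  rw [← hu] at hp'
  have hle := hp.length_le hp'
  have hcA : (((i * a : ℕ) : ZMod n) :: (l₁ ++ [((w * a : ℕ) : ZMod n)])).IsChain (circA n d) :=
    hc.prefix ⟨l₂, by simp⟩
  have hcB : (((w * a : ℕ) : ZMod n) :: l₂).IsChain (circA n d) := hc.right_of_append
  have hA := offset_le_of_isChain n d D₁ hD₁ _ _ hcA (by
    rw [← hu₁, ← List.cons_append, List.getLast?_append_cons]; rfl)
  have hB := offset_le_of_isChain n d D₂ hD₂ _ _ hcB (by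
    rw [← hu₂]; rwa [List.getLast?_append_cons] at hlast)
  have hA' : stepDist q i w < (l₁ ++ [((w * a : ℕ) : ZMod n)]).length + 1 := by
    refine Nat.lt_of_mul_lt_mul_right (a := d) ?_
    rw [Nat.add_mul]; omega
  have hB' : stepDist q w j < l₂.length + 1 := by
    refine Nat.lt_of_mul_lt_mul_right (a := d) ?_
    rw [Nat.add_mul]; omega
  have ht := stepDist_lt q i w j hq
  simp only [List.length_append, List.length_cons, List.length_nil] at hle hA'
  omega

/-- If `n = q·d + a` with `2 ≤ a ≤ d + 1`, then
`gp(Circ(n, {1, …, d})) ≥ ⌈(d+1)/a⌉` (note `⌈(d+1)/a⌉ = (d + a) / a` in `ℕ`). -/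
theorem gp_circulant_lower_bound (d q a n : ℕ) (hd : 1 ≤ d)
    (ha : 2 ≤ a) (had : a ≤ d + 1) (hn : n = q * d + a) (hdn : d < n) :
    letI : NeZero n := ⟨by omega⟩
    (d + a) / a ≤ gp (ZMod n) (circA n d) := by
  have : NeZero n := ⟨by omega⟩
  have hk : ∀ i < (d + a) / a, i * a ≤ d := by
    intro i hi
    have e : (i + 1) * a ≤ d + a := (Nat.le_div_iff_mul_le (by omega)).1 hi
    rw [Nat.add_mul] at e
    omega
  refine le_csSup ⟨Nat.card (ZMod n), ?_⟩ ⟨_, inGenPos_multiples d q a n _ ha hn hdn hk, ?_⟩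
  · rintro _ ⟨S, -, rfl⟩
    exact Set.ncard_le_card S
  · rw [Set.InjOn.ncard_image, Set.ncard_eq_toFinset_card']
    · simp
    · intro i hi j hj hij
      have h' := (ZMod.natCast_eq_natCast_iff' _ _ n).1 hij
      rw [Nat.mod_eq_of_lt ((hk i hi).trans_lt hdn),
        Nat.mod_eq_of_lt ((hk j hj).trans_lt hdn)] at h'
      exact Nat.eq_of_mul_eq_mul_right (by omega) h'
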